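/- arXiv:1111.0120 — 10 statements merged into one kernel-verified Lean document; each statement's English description precedes it below -/
import Mathlib

section
/- Let U ⊆ ℝ be an open set, V : ℝ → ℂ a function, λ₁ ∈ ℂ, and ψ₁ : ℝ → ℂ a function that is twice differentiable on U, nonvanishing on U, and satisfies ψ₁''(x) = (V(x) − λ₁)·ψ₁(x) for all x ∈ U. Define V₊(x) = V(x) − 2·(d/dx)(ψ₁'/ψ₁)(x). Then the function Ψ⁺ = 1/ψ₁ satisfies the transformed Schrödinger equation at the same eigenvalue: −Ψ⁺''(x) + V₊(x)·Ψ⁺(x) = λ₁·Ψ⁺(x) for all x ∈ U. -/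
/-- Theorem 2.10(i): the Darboux transform Ψ⁺ = 1/ψ₁ of a nonvanishing solution ψ₁
of Hψ₁ = λ₁ψ₁ satisfies the transformed Schrödinger equation
−Ψ⁺'' + V₊·Ψ⁺ = λ₁·Ψ⁺, where V₊ = V − 2·(ψ₁'/ψ₁)'. -/
theorem darboux_transform_of_particular_solution
    (U : Set ℝ) (hU : IsOpen U) (V : ℝ → ℂ) (lam₁ : ℂ) (ψ₁ : ℝ → ℂ)
    (hd1 : ∀ x ∈ U, DifferentiableAt ℝ ψ₁ x)
    (hd2 : ∀ x ∈ U, DifferentiableAt ℝ (deriv ψ₁) x)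
    (hne : ∀ x ∈ U, ψ₁ x ≠ 0)
    (heq : ∀ x ∈ U, deriv (deriv ψ₁) x = (V x - lam₁) * ψ₁ x)
    (Vplus : ℝ → ℂ)
    (hVplus : ∀ x ∈ U, Vplus x = V x - 2 * deriv (fun t => deriv ψ₁ t / ψ₁ t) x) :
    ∀ x ∈ U,
      -(deriv (deriv (fun t => (ψ₁ t)⁻¹)) x) + Vplus x * (ψ₁ x)⁻¹
        = lam₁ * (ψ₁ x)⁻¹ := by
  intro x hx
  have h0 := hne x hx
  have hA : ∀ t ∈ U, HasDerivAt (fun t => (ψ₁ t)⁻¹) (-deriv ψ₁ t / ψ₁ t ^ 2) t := by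
    intro t ht
    exact (hd1 t ht).hasDerivAt.fun_inv (hne t ht)
  have hE : deriv (fun t => (ψ₁ t)⁻¹) =ᶠ[nhds x] fun t => -deriv ψ₁ t / ψ₁ t ^ 2 := by
    filter_upwards [hU.mem_nhds hx] with t ht
    exact (hA t ht).deriv
  have h1 := (hd1 x hx).hasDerivAt
  have h2 := (hd2 x hx).hasDerivAt
  have hB := (h2.fun_neg.fun_div (h1.fun_pow 2) (pow_ne_zero 2 h0)).deriv
  have hC := (h2.fun_div h1 h0).deriv
  rw [hE.deriv_eq, hB, hVplus x hx, hC, heq x hx]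
  field_simp
  push_cast
  ring
end

section
/- Let U ⊆ ℝ be an open set, V : ℝ → ℂ differentiable on U, and λ₁, λ ∈ ℂ. Let ψ₁ : ℝ → ℂ be three times differentiable on U, nonvanishing on U, with ψ₁''(x) = (V(x) − λ₁)·ψ₁(x) on U, and let ψ : ℝ → ℂ be three times differentiable on U with ψ''(x) = (V(x) − λ)·ψ(x) on U. Define V₊(x) = V(x) − 2·(d/dx)(ψ₁'/ψ₁)(x) and Ψ⁺(x) = ψ'(x) − (ψ₁'(x)/ψ₁(x))·ψ(x). Then −Ψ⁺''(x) + V₊(x)·Ψ⁺(x) = λ·Ψ⁺(x) for all x ∈ U. -/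
/-- Theorem 2.10(ii): the Darboux transformation sends a solution ψ of Hψ = λψ to
Ψ⁺ = ψ' − (ψ₁'/ψ₁)·ψ, which is a solution of the partner equation
−Ψ⁺'' + V₊·Ψ⁺ = λ·Ψ⁺ with V₊ = V − 2·(ψ₁'/ψ₁)'. -/
theorem darboux_transform_of_general_solution
    (U : Set ℝ) (hU : IsOpen U) (V : ℝ → ℂ) (lam₁ lam : ℂ) (ψ₁ ψ : ℝ → ℂ)
    (hV : ∀ x ∈ U, DifferentiableAt ℝ V x)
    (hψ₁d1 : ∀ x ∈ U, DifferentiableAt ℝ ψ₁ x)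
    (hψ₁d2 : ∀ x ∈ U, DifferentiableAt ℝ (deriv ψ₁) x)
    (hψ₁d3 : ∀ x ∈ U, DifferentiableAt ℝ (deriv (deriv ψ₁)) x)
    (hne : ∀ x ∈ U, ψ₁ x ≠ 0)
    (heq₁ : ∀ x ∈ U, deriv (deriv ψ₁) x = (V x - lam₁) * ψ₁ x)
    (hψd1 : ∀ x ∈ U, DifferentiableAt ℝ ψ x)
    (hψd2 : ∀ x ∈ U, DifferentiableAt ℝ (deriv ψ) x)
    (hψd3 : ∀ x ∈ U, DifferentiableAt ℝ (deriv (deriv ψ)) x)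
    (heq : ∀ x ∈ U, deriv (deriv ψ) x = (V x - lam) * ψ x)
    (Vplus : ℝ → ℂ) (Ψplus : ℝ → ℂ)
    (hVplus : ∀ x ∈ U, Vplus x = V x - 2 * deriv (fun t => deriv ψ₁ t / ψ₁ t) x)
    (hΨplus : ∀ x, Ψplus x = deriv ψ x - (deriv ψ₁ x / ψ₁ x) * ψ x) :
    ∀ x ∈ U, -(deriv (deriv Ψplus) x) + Vplus x * Ψplus x = lam * Ψplus x := by
  have hs : ∀ x ∈ U, HasDerivAt (fun t => deriv ψ₁ t / ψ₁ t)
      (V x - lam₁ - (deriv ψ₁ x / ψ₁ x) ^ 2) x := by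
    intro x hx
    have h := (hψ₁d2 x hx).hasDerivAt.fun_div (hψ₁d1 x hx).hasDerivAt (hne x hx)
    refine h.congr_deriv ?_
    rw [heq₁ x hx]
    have := hne x hx
    field_simp
  have hfun : Ψplus = fun t => deriv ψ t - (deriv ψ₁ t / ψ₁ t) * ψ t := funext hΨplus
  have h1 : ∀ x ∈ U, HasDerivAt Ψplus
      ((lam₁ - lam) * ψ x - (deriv ψ₁ x / ψ₁ x) * Ψplus x) x := by
    intro x hx
    have h := (hψd2 x hx).hasDerivAt.fun_sub ((hs x hx).fun_mul (hψd1 x hx).hasDerivAt)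
    rw [← hfun] at h
    refine h.congr_deriv ?_
    rw [heq x hx, hΨplus x]
    ring
  intro x hx
  have hev : deriv Ψplus =ᶠ[nhds x]
      fun t => (lam₁ - lam) * ψ t - (deriv ψ₁ t / ψ₁ t) * Ψplus t := by
    filter_upwards [hU.mem_nhds hx] with t ht
    exact (h1 t ht).deriv
  have h2 := ((hψd1 x hx).hasDerivAt.const_mul (lam₁ - lam)).fun_sub
    ((hs x hx).fun_mul (h1 x hx))
  rw [hev.deriv_eq, h2.deriv, hVplus x hx, (hs x hx).deriv, hΨplus x]
  ring
end

section
/- Let U ⊆ ℂ be a nonempty connected open set and W : ℂ → ℂ a function that is (complex-)differentiable on U with derivative differentiable on U. Define the supersymmetric partner potentials V₊ = (W² + W')/2 and V₋ = (W² − W')/2 on U. Then the following are equivalent: (a) there exist polynomials p₁, q₁, p₂, q₂ ∈ ℂ[X] with q₁ ≠ 0 and q₂ ≠ 0 such that q₁(z)·V₊(z) = p₁(z) and q₂(z)·V₋(z) = p₂(z) for all z ∈ U; (b) there exist polynomials p, q ∈ ℂ[X] with q ≠ 0 such that q(z)·W(z) = p(z) for all z ∈ U. -/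
/-- Proposition 2.12: the supersymmetric partner potentials
V₊ = (W² + W')/2 and V₋ = (W² − W')/2 are rational functions on U
if and only if the superpotential W is a rational function on U. -/
theorem partner_potentials_rational_iff_superpotential_rational
    (U : Set ℂ) (hne : U.Nonempty) (hconn : IsConnected U) (hopen : IsOpen U)
    (W : ℂ → ℂ)
    (hd1 : ∀ z ∈ U, DifferentiableAt ℂ W z)
    (hd2 : ∀ z ∈ U, DifferentiableAt ℂ (deriv W) z) :
    (∃ p₁ q₁ p₂ q₂ : Polynomial ℂ, q₁ ≠ 0 ∧ q₂ ≠ 0 ∧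
        (∀ z ∈ U, q₁.eval z * ((W z ^ 2 + deriv W z) / 2) = p₁.eval z) ∧
        (∀ z ∈ U, q₂.eval z * ((W z ^ 2 - deriv W z) / 2) = p₂.eval z)) ↔
    (∃ p q : Polynomial ℂ, q ≠ 0 ∧ ∀ z ∈ U, q.eval z * W z = p.eval z) := by
  constructor
  · rintro ⟨p₁, q₁, p₂, q₂, h1, h2, H1, H2⟩
    set Q := q₁ * q₂ with hQ
    set P := p₁ * q₂ + p₂ * q₁ with hP
    set R := p₁ * q₂ - p₂ * q₁ with hR
    have hQ0 : Q ≠ 0 := mul_ne_zero h1 h2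
    have HP : ∀ z ∈ U, Q.eval z * W z ^ 2 = P.eval z := by
      intro z hz
      simp only [hQ, hP, Polynomial.eval_mul, Polynomial.eval_add]
      rw [← H1 z hz, ← H2 z hz]; ring
    have HR : ∀ z ∈ U, Q.eval z * deriv W z = R.eval z := by
      intro z hz
      simp only [hQ, hR, Polynomial.eval_mul, Polynomial.eval_sub]
      rw [← H1 z hz, ← H2 z hz]; ring
    by_cases hR0 : R = 0
    · have hW' : ∀ z ∈ U, deriv W z = 0 := by
        intro z hz
        have hroots : ∀ᶠ w in nhdsWithin z {z}ᶜ, w ∉ (Q.roots.toFinset : Set ℂ) := by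
          have hfin : ((Q.roots.toFinset : Set ℂ) \ {z}).Finite :=
            (Finset.finite_toSet _).subset Set.diff_subset
          have h := hfin.isClosed.isOpen_compl.mem_nhds
            (show z ∈ ((Q.roots.toFinset : Set ℂ) \ {z})ᶜ by simp)
          filter_upwards [mem_nhdsWithin_of_mem_nhds h, self_mem_nhdsWithin] with w hw hwz hm
          exact hw ⟨hm, hwz⟩
        have hev : ∀ᶠ w in nhdsWithin z {z}ᶜ, deriv W w = 0 := by
          filter_upwards [hroots, mem_nhdsWithin_of_mem_nhds (hopen.mem_nhds hz)] with w hw hwU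
          have h := HR w hwU
          rw [hR0, Polynomial.eval_zero] at h
          rcases mul_eq_zero.mp h with h | h
          · exact absurd (by simp [hQ0, h]) hw
          · exact h
        have t1 : Filter.Tendsto (deriv W) (nhdsWithin z {z}ᶜ) (nhds (deriv W z)) :=
          (hd2 z hz).continuousAt.tendsto.mono_left nhdsWithin_le_nhds
        have t2 : Filter.Tendsto (deriv W) (nhdsWithin z {z}ᶜ) (nhds 0) :=
          tendsto_const_nhds.congr' (hev.mono fun w hw => hw.symm)
        exact tendsto_nhds_unique t1 t2
      obtain ⟨c, hc⟩ := hopen.exists_is_const_of_deriv_eq_zero hconn.isPreconnected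
        (fun z hz => (hd1 z hz).differentiableWithinAt) (fun z hz => hW' z hz)
      exact ⟨Polynomial.C c, 1, one_ne_zero, fun z hz => by simp [hc z hz]⟩
    · refine ⟨Polynomial.derivative P * Q - Polynomial.derivative Q * P,
        Polynomial.C 2 * Q * R, ?_, ?_⟩
      · exact mul_ne_zero (mul_ne_zero (by simp) hQ0) hR0
      · intro z hz
        have hev : (fun w => Q.eval w * W w ^ 2) =ᶠ[nhds z] fun w => P.eval w := by
          filter_upwards [hopen.mem_nhds hz] with w hw using HP w hw
        have hD := ((Q.hasDerivAt z).mul ((hd1 z hz).hasDerivAt.pow 2)).unique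
          ((P.hasDerivAt z).congr_of_eventuallyEq hev)
        simp only [Polynomial.eval_mul, Polynomial.eval_sub, Polynomial.eval_C]
        rw [← hD, ← HP z hz, ← HR z hz]
        simp
        ring
  · rintro ⟨p, q, hq, H⟩
    have HD : ∀ z ∈ U, (Polynomial.derivative q).eval z * W z + q.eval z * deriv W z
        = (Polynomial.derivative p).eval z := by
      intro z hz
      have hev : (fun w => q.eval w * W w) =ᶠ[nhds z] fun w => p.eval w := by
        filter_upwards [hopen.mem_nhds hz] with w hw using H w hw
      exact ((q.hasDerivAt z).mul (hd1 z hz).hasDerivAt).unique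
        ((p.hasDerivAt z).congr_of_eventuallyEq hev)
    have h2 : Polynomial.C (2 : ℂ) * q ^ 2 ≠ 0 := mul_ne_zero (by simp) (pow_ne_zero 2 hq)
    refine ⟨p ^ 2 + (Polynomial.derivative p * q - Polynomial.derivative q * p),
      Polynomial.C 2 * q ^ 2,
      p ^ 2 - (Polynomial.derivative p * q - Polynomial.derivative q * p),
      Polynomial.C 2 * q ^ 2, h2, h2, ?_, ?_⟩
    all_goals
      intro z hz
      simp only [Polynomial.eval_mul, Polynomial.eval_sub, Polynomial.eval_add,
        Polynomial.eval_pow, Polynomial.eval_C]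
      rw [← HD z hz, ← H z hz]
      ring
end

section
/- Let P, Q ∈ ℝ[x,y] and consider the planar polynomial vector field X = P·∂/∂x + Q·∂/∂y. Suppose f₁, …, f_p ∈ ℝ[x,y] are polynomials with cofactors K₁, …, K_p ∈ ℝ[x,y], i.e. P·∂f_i/∂x + Q·∂f_i/∂y = K_i·f_i identically, and suppose g₁, h₁, …, g_q, h_q ∈ ℝ[x,y] are polynomials with cofactors L₁, …, L_q ∈ ℝ[x,y] in the sense that h_j·(P·∂g_j/∂x + Q·∂g_j/∂y) − g_j·(P·∂h_j/∂x + Q·∂h_j/∂y) = L_j·h_j² identically. Let λ₁, …, λ_p, μ₁, …, μ_q ∈ ℝ satisfy Σᵢ λ_i·K_i + Σⱼ μ_j·L_j = 0 as polynomials. Then on any open set Ω ⊆ ℝ² on which every f_i is strictly positive and every h_j is nonvanishing, the function H(x,y) = ∏ᵢ f_i(x,y)^{λ_i} · ∏ⱼ exp(μ_j·g_j(x,y)/h_j(x,y)) (real powers) satisfies P·∂H/∂x + Q·∂H/∂y = 0 on Ω, i.e. H is a first integral of X on Ω. -/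
open MvPolynomial

lemma aux_deriv_x (p : MvPolynomial (Fin 2) ℝ) (x y : ℝ) :
    HasDerivAt (fun s => eval ![s, y] p) (eval ![x, y] (pderiv 0 p)) x := by
  induction p using MvPolynomial.induction_on with
  | C a => simpa using hasDerivAt_const x a
  | add p q hp hq => simp only [map_add]; exact hp.add hq
  | mul_X p i hp =>
    have hX : HasDerivAt (fun s => eval ![s, y] (X i : MvPolynomial (Fin 2) ℝ))
        (eval ![x, y] (pderiv 0 (X i : MvPolynomial (Fin 2) ℝ))) x := by
      fin_cases i
      · simpa [pderiv_X] using hasDerivAt_id' x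
      · simpa [pderiv_X] using hasDerivAt_const x y
    have := hp.mul hX
    simp only [map_mul, Derivation.leibniz, smul_eq_mul, map_add]
    refine HasDerivAt.congr_deriv this ?_
    ring

lemma aux_deriv_y (p : MvPolynomial (Fin 2) ℝ) (x y : ℝ) :
    HasDerivAt (fun s => eval ![x, s] p) (eval ![x, y] (pderiv 1 p)) y := by
  induction p using MvPolynomial.induction_on with
  | C a => simpa using hasDerivAt_const y a
  | add p q hp hq => simp only [map_add]; exact hp.add hq
  | mul_X p i hp =>
    have hX : HasDerivAt (fun s => eval ![x, s] (X i : MvPolynomial (Fin 2) ℝ))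
        (eval ![x, y] (pderiv 1 (X i : MvPolynomial (Fin 2) ℝ))) y := by
      fin_cases i
      · simpa [pderiv_X] using hasDerivAt_const y x
      · simpa [pderiv_X] using hasDerivAt_id' y
    have := hp.mul hX
    simp only [map_mul, Derivation.leibniz, smul_eq_mul, map_add]
    refine HasDerivAt.congr_deriv this ?_
    ring

lemma aux_prod {ι : Type*} (s : Finset ι) (u : ι → ℝ → ℝ) (c : ι → ℝ) (t : ℝ)
    (hu : ∀ i, HasDerivAt (u i) (u i t * c i) t) :
    HasDerivAt (fun r => ∏ i ∈ s, u i r) ((∏ i ∈ s, u i t) * ∑ i ∈ s, c i) t := by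
  classical
  induction s using Finset.induction_on with
  | empty => simpa using hasDerivAt_const t (1 : ℝ)
  | insert a s ha ih =>
    simp only [Finset.prod_insert ha, Finset.sum_insert ha]
    refine HasDerivAt.congr_deriv ((hu a).mul ih) ?_
    ring

lemma aux_main (p q : ℕ) (F : Fin p → ℝ → ℝ) (F' : Fin p → ℝ)
    (G D : Fin q → ℝ → ℝ) (G' D' : Fin q → ℝ) (lam : Fin p → ℝ) (mu : Fin q → ℝ) (t : ℝ)
    (hF : ∀ i, HasDerivAt (F i) (F' i) t) (hG : ∀ j, HasDerivAt (G j) (G' j) t)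
    (hD : ∀ j, HasDerivAt (D j) (D' j) t) (hp : ∀ i, 0 < F i t) (hn : ∀ j, D j t ≠ 0) :
    HasDerivAt (fun r => (∏ i, F i r ^ lam i) * ∏ j, Real.exp (mu j * G j r / D j r))
      (((∏ i, F i t ^ lam i) * ∏ j, Real.exp (mu j * G j t / D j t)) *
        (∑ i, lam i * (F' i / F i t) +
          ∑ j, mu j * ((G' j * D j t - G j t * D' j) / D j t ^ 2))) t := by
  have h1 := aux_prod Finset.univ (fun i r => F i r ^ lam i)
    (fun i => lam i * (F' i / F i t)) t (fun i => by
      convert (hF i).rpow_const (p := lam i) (Or.inl (hp i).ne') using 1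
      rw [Real.rpow_sub_one (hp i).ne']
      ring)
  have h2 := aux_prod Finset.univ (fun j r => Real.exp (mu j * G j r / D j r))
    (fun j => mu j * ((G' j * D j t - G j t * D' j) / D j t ^ 2)) t (fun j => by
      refine HasDerivAt.congr_deriv (((hG j).const_mul (mu j)).div (hD j) (hn j)).exp ?_
      change Real.exp (mu j * G j t / D j t) * _ = _
      ring)
  refine HasDerivAt.congr_deriv (h1.mul h2) ?_
  ring

/-- Theorem 2.14(a): the Darboux integrability criterion. If the cofactors of the
invariant algebraic curves f_i and of the exponential factors exp(g_j/h_j) satisfy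
Σ λ_i K_i + Σ μ_j L_j = 0, then H = Π f_i^{λ_i} · Π exp(μ_j g_j / h_j) is a first
integral of X = P ∂/∂x + Q ∂/∂y on any open set where the f_i are positive and the
h_j nonvanishing. -/
theorem darboux_first_integral
    (P Q : MvPolynomial (Fin 2) ℝ) (p q : ℕ)
    (f K : Fin p → MvPolynomial (Fin 2) ℝ)
    (g h L : Fin q → MvPolynomial (Fin 2) ℝ)
    (hf : ∀ i, P * pderiv 0 (f i) + Q * pderiv 1 (f i) = K i * f i)
    (hg : ∀ j, h j * (P * pderiv 0 (g j) + Q * pderiv 1 (g j))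
        - g j * (P * pderiv 0 (h j) + Q * pderiv 1 (h j)) = L j * (h j) ^ 2)
    (lam : Fin p → ℝ) (mu : Fin q → ℝ)
    (hsum : ∑ i, C (lam i) * K i + ∑ j, C (mu j) * L j = 0)
    (Ω : Set (ℝ × ℝ)) (hΩ : IsOpen Ω)
    (hpos : ∀ z ∈ Ω, ∀ i, 0 < eval ![z.1, z.2] (f i))
    (hhne : ∀ z ∈ Ω, ∀ j, eval ![z.1, z.2] (h j) ≠ 0)
    (H : ℝ → ℝ → ℝ)
    (hH : ∀ x y, H x y =
        (∏ i, (eval ![x, y] (f i)) ^ (lam i)) *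
        ∏ j, Real.exp (mu j * eval ![x, y] (g j) / eval ![x, y] (h j))) :
    ∀ z ∈ Ω,
      eval ![z.1, z.2] P * deriv (fun s => H s z.2) z.1
        + eval ![z.1, z.2] Q * deriv (fun t => H z.1 t) z.2 = 0 := by
  intro z hz
  obtain ⟨x, y⟩ := z
  have hp := hpos _ hz
  have hn := hhne _ hz
  simp only at hp hn ⊢
  have h1 := aux_main p q _ _ _ _ _ _ lam mu x (fun i => aux_deriv_x (f i) x y)
    (fun j => aux_deriv_x (g j) x y) (fun j => aux_deriv_x (h j) x y) hp hn
  have h2 := aux_main p q _ _ _ _ _ _ lam mu y (fun i => aux_deriv_y (f i) x y)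
    (fun j => aux_deriv_y (g j) x y) (fun j => aux_deriv_y (h j) x y) hp hn
  simp only [hH]
  rw [h1.deriv, h2.deriv]
  have hs := congrArg (eval ![x, y]) hsum
  simp only [map_add, map_sum, map_mul, eval_C, map_zero] at hs
  have e1 : ∀ i, eval ![x, y] (K i) = eval ![x, y] P *
      (eval ![x, y] (pderiv 0 (f i)) / eval ![x, y] (f i)) + eval ![x, y] Q *
      (eval ![x, y] (pderiv 1 (f i)) / eval ![x, y] (f i)) := fun i => by
    have := congrArg (eval ![x, y]) (hf i)
    simp only [map_add, map_mul] at this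
    have h0 := (hp i).ne'
    field_simp
    linarith
  have e2 : ∀ j, eval ![x, y] (L j) = eval ![x, y] P *
      ((eval ![x, y] (pderiv 0 (g j)) * eval ![x, y] (h j) -
        eval ![x, y] (g j) * eval ![x, y] (pderiv 0 (h j))) / eval ![x, y] (h j) ^ 2) +
      eval ![x, y] Q *
      ((eval ![x, y] (pderiv 1 (g j)) * eval ![x, y] (h j) -
        eval ![x, y] (g j) * eval ![x, y] (pderiv 1 (h j))) / eval ![x, y] (h j) ^ 2) :=
    fun j => by
    have := congrArg (eval ![x, y]) (hg j)
    simp only [map_add, map_sub, map_mul, map_pow] at this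
    have h0 := hn j
    field_simp
    linarith
  simp only [e1, e2, mul_add, Finset.sum_add_distrib, mul_left_comm (lam _),
    mul_left_comm (mu _), ← Finset.mul_sum] at hs
  linear_combination ((∏ i, eval ![x, y] (f i) ^ lam i) *
    ∏ j, Real.exp (mu j * eval ![x, y] (g j) / eval ![x, y] (h j))) * hs
end

section
/- Let P, Q ∈ ℝ[x,y] and consider the planar polynomial vector field X = P·∂/∂x + Q·∂/∂y. Suppose f₁, …, f_p ∈ ℝ[x,y] are polynomials with cofactors K₁, …, K_p ∈ ℝ[x,y], i.e. P·∂f_i/∂x + Q·∂f_i/∂y = K_i·f_i identically, and suppose g₁, h₁, …, g_q, h_q ∈ ℝ[x,y] are polynomials with cofactors L₁, …, L_q ∈ ℝ[x,y] in the sense that h_j·(P·∂g_j/∂x + Q·∂g_j/∂y) − g_j·(P·∂h_j/∂x + Q·∂h_j/∂y) = L_j·h_j² identically. Let λ₁, …, λ_p, μ₁, …, μ_q ∈ ℝ satisfy Σᵢ λ_i·K_i + Σⱼ μ_j·L_j + (∂P/∂x + ∂Q/∂y) = 0 as polynomials. Then on any open set Ω ⊆ ℝ² on which every f_i is strictly positive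 and every h_j is nonvanishing, the function R(x,y) = ∏ᵢ f_i(x,y)^{λ_i} · ∏ⱼ exp(μ_j·g_j(x,y)/h_j(x,y)) (real powers) satisfies ∂(R·P)/∂x + ∂(R·Q)/∂y = 0 on Ω, i.e. R is an integrating factor of X on Ω. -/
open MvPolynomial

theorem hasDerivAt_eval_curve (p : MvPolynomial (Fin 2) ℝ) (c : ℝ → Fin 2 → ℝ) (dc : Fin 2 → ℝ)
    (s : ℝ) (hc : ∀ k, HasDerivAt (fun t => c t k) (dc k) s) :
    HasDerivAt (fun t => eval (c t) p)
      (dc 0 * eval (c s) (pderiv 0 p) + dc 1 * eval (c s) (pderiv 1 p)) s := by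
  induction p using MvPolynomial.induction_on with
  | C a => simpa using hasDerivAt_const s a
  | add p q hp hq =>
    simp only [map_add]
    exact (hp.add hq).congr_deriv (by ring)
  | mul_X p n hp =>
    simp only [map_mul, eval_X]
    refine (hp.mul (hc n)).congr_deriv ?_
    fin_cases n <;> simp [Derivation.leibniz, pderiv_X] <;> ring

theorem hasDerivAt_prod_logd {ι : Type*} (S : Finset ι) (u : ι → ℝ → ℝ) (d : ι → ℝ) (s : ℝ)
    (hu : ∀ i, HasDerivAt (u i) (u i s * d i) s) :
    HasDerivAt (fun t => ∏ i ∈ S, u i t) ((∏ i ∈ S, u i s) * ∑ i ∈ S, d i) s := by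
  classical
  induction S using Finset.induction_on with
  | empty => simpa using hasDerivAt_const s (1 : ℝ)
  | insert a S ha ih =>
    simp only [Finset.prod_insert ha, Finset.sum_insert ha]
    exact ((hu a).mul ih).congr_deriv (by ring)

theorem hasDerivAt_darboux {p q : ℕ} (F : Fin p → ℝ → ℝ) (dF lam : Fin p → ℝ)
    (G H : Fin q → ℝ → ℝ) (dG dH mu : Fin q → ℝ) (s : ℝ)
    (hF : ∀ i, HasDerivAt (F i) (dF i) s) (hG : ∀ j, HasDerivAt (G j) (dG j) s)
    (hH : ∀ j, HasDerivAt (H j) (dH j) s) (hp : ∀ i, 0 < F i s) (hn : ∀ j, H j s ≠ 0) :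
    HasDerivAt (fun t => (∏ i, (F i t) ^ (lam i)) * ∏ j, Real.exp (mu j * G j t / H j t))
      (((∏ i, (F i s) ^ (lam i)) * ∏ j, Real.exp (mu j * G j s / H j s)) *
        (∑ i, lam i * dF i / F i s + ∑ j, mu j * (dG j * H j s - G j s * dH j) / (H j s) ^ 2))
      s := by
  have h1 := hasDerivAt_prod_logd Finset.univ (fun i t => (F i t) ^ (lam i))
    (fun i => lam i * dF i / F i s) s (fun i => by
      refine ((hF i).rpow_const (p := lam i) (Or.inl (hp i).ne')).congr_deriv ?_
      have := (hp i).ne'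
      rw [Real.rpow_sub_one this]
      field_simp)
  have h2 := hasDerivAt_prod_logd Finset.univ (fun j t => Real.exp (mu j * G j t / H j t))
    (fun j => mu j * (dG j * H j s - G j s * dH j) / (H j s) ^ 2) s (fun j => by
      refine ((((hG j).const_mul (mu j)).div (hH j) (hn j)).exp).congr_deriv ?_
      simp only [Pi.div_apply]
      ring)
  exact (h1.mul h2).congr_deriv (by ring)

/-- Theorem 2.14(b): the Darboux integrating-factor criterion. If the cofactors
satisfy Σ λ_i K_i + Σ μ_j L_j + (∂P/∂x + ∂Q/∂y) = 0, then
R = Π f_i^{λ_i} · Π exp(μ_j g_j / h_j) is an integrating factor of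
X = P ∂/∂x + Q ∂/∂y, i.e. ∂(RP)/∂x + ∂(RQ)/∂y = 0, on any open set where the f_i
are positive and the h_j nonvanishing. -/
theorem darboux_integrating_factor
    (P Q : MvPolynomial (Fin 2) ℝ) (p q : ℕ)
    (f K : Fin p → MvPolynomial (Fin 2) ℝ)
    (g h L : Fin q → MvPolynomial (Fin 2) ℝ)
    (hf : ∀ i, P * pderiv 0 (f i) + Q * pderiv 1 (f i) = K i * f i)
    (hg : ∀ j, h j * (P * pderiv 0 (g j) + Q * pderiv 1 (g j))
        - g j * (P * pderiv 0 (h j) + Q * pderiv 1 (h j)) = L j * (h j) ^ 2)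
    (lam : Fin p → ℝ) (mu : Fin q → ℝ)
    (hsum : ∑ i, C (lam i) * K i + ∑ j, C (mu j) * L j
        + (pderiv 0 P + pderiv 1 Q) = 0)
    (Ω : Set (ℝ × ℝ)) (hΩ : IsOpen Ω)
    (hpos : ∀ z ∈ Ω, ∀ i, 0 < eval ![z.1, z.2] (f i))
    (hhne : ∀ z ∈ Ω, ∀ j, eval ![z.1, z.2] (h j) ≠ 0)
    (R : ℝ → ℝ → ℝ)
    (hR : ∀ x y, R x y =
        (∏ i, (eval ![x, y] (f i)) ^ (lam i)) *
        ∏ j, Real.exp (mu j * eval ![x, y] (g j) / eval ![x, y] (h j))) :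
    ∀ z ∈ Ω,
      deriv (fun s => R s z.2 * eval ![s, z.2] P) z.1
        + deriv (fun t => R z.1 t * eval ![z.1, t] Q) z.2 = 0 := by
  rintro ⟨x, y⟩ hz
  have hp := hpos _ hz
  have hn := hhne _ hz
  simp only at hp hn ⊢
  have ex : ∀ r : MvPolynomial (Fin 2) ℝ,
      HasDerivAt (fun t => eval ![t, y] r) (eval ![x, y] (pderiv 0 r)) x := fun r => by
    have := hasDerivAt_eval_curve r (fun t => ![t, y]) ![1, 0] x (fun k => by
      fin_cases k
      · simpa using hasDerivAt_id' x
      · simpa using hasDerivAt_const x y)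
    simpa using this
  have ey : ∀ r : MvPolynomial (Fin 2) ℝ,
      HasDerivAt (fun t => eval ![x, t] r) (eval ![x, y] (pderiv 1 r)) y := fun r => by
    have := hasDerivAt_eval_curve r (fun t => ![x, t]) ![0, 1] y (fun k => by
      fin_cases k
      · simpa using hasDerivAt_const y x
      · simpa using hasDerivAt_id' y)
    simpa using this
  have dx := (hasDerivAt_darboux _ _ lam _ _ _ _ mu x (fun i => ex (f i)) (fun j => ex (g j))
    (fun j => ex (h j)) hp hn).mul (ex P)
  have dy := (hasDerivAt_darboux _ _ lam _ _ _ _ mu y (fun i => ey (f i)) (fun j => ey (g j))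
    (fun j => ey (h j)) hp hn).mul (ey Q)
  simp only [← hR] at dx dy
  have e1 := dx.deriv
  have e2 := dy.deriv
  simp only [Pi.mul_def] at e1 e2
  rw [e1, e2]
  have hs := congrArg (eval ![x, y]) hsum
  simp only [map_add, map_sum, map_mul, eval_C, map_zero] at hs
  have k1 : ∑ i, lam i * eval ![x, y] (K i) =
      (∑ i, lam i * eval ![x, y] (pderiv 0 (f i)) / eval ![x, y] (f i)) * eval ![x, y] P +
      (∑ i, lam i * eval ![x, y] (pderiv 1 (f i)) / eval ![x, y] (f i)) * eval ![x, y] Q := by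
    rw [Finset.sum_mul, Finset.sum_mul, ← Finset.sum_add_distrib]
    refine Finset.sum_congr rfl fun i _ => ?_
    have e := congrArg (eval ![x, y]) (hf i)
    simp only [map_add, map_mul] at e
    have := (hp i).ne'
    field_simp
    linear_combination (-lam i) * e
  have k2 : ∑ j, mu j * eval ![x, y] (L j) =
      (∑ j, mu j * (eval ![x, y] (pderiv 0 (g j)) * eval ![x, y] (h j)
        - eval ![x, y] (g j) * eval ![x, y] (pderiv 0 (h j))) / eval ![x, y] (h j) ^ 2)
        * eval ![x, y] P +
      (∑ j, mu j * (eval ![x, y] (pderiv 1 (g j)) * eval ![x, y] (h j)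
        - eval ![x, y] (g j) * eval ![x, y] (pderiv 1 (h j))) / eval ![x, y] (h j) ^ 2)
        * eval ![x, y] Q := by
    rw [Finset.sum_mul, Finset.sum_mul, ← Finset.sum_add_distrib]
    refine Finset.sum_congr rfl fun j _ => ?_
    have e := congrArg (eval ![x, y]) (hg j)
    simp only [map_add, map_sub, map_mul, map_pow] at e
    have := hn j
    field_simp
    linear_combination (-mu j) * e
  rw [k1, k2] at hs
  linear_combination (R x y) * hs
end

section
/- Let U ⊆ ℂ be an open set, T, N ∈ ℂ[X] polynomials with N nonvanishing on U, and λ ∈ ℂ. Let ζ_λ : ℂ → ℂ be differentiable on U with N(x)·ζ_λ'(x) = T(x) − λ·N(x) − N(x)·ζ_λ(x)² on U, and let g : ℂ → ℂ be differentiable on U with g'(x) = −N'(x)/N(x) − 2·ζ_λ(x) on U. Define R(ζ, x) = exp(g(x)) / (−ζ + ζ_λ(x))². Then R is an integrating factor of the vector field X = (T(x) − λ·N(x) − N(x)·ζ²)·∂/∂ζ + N(x)·∂/∂x: at every point (ζ, x) with x ∈ U and ζ ≠ ζ_λ(x), ∂/∂ζ [R(ζ,x)·(T(x) − λ·N(x)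 − N(x)·ζ²)] + ∂/∂x [R(ζ,x)·N(x)] = 0. -/
/-- Lemma 3.3, integrating-factor item: R(ζ,x) = exp(g(x))/(−ζ + ζ_λ(x))², with
g' = −N'/N − 2ζ_λ, is an integrating factor of the vector field
X = (T − λN − Nζ²)·∂/∂ζ + N·∂/∂x. -/
theorem riccati_integrating_factor
    (U : Set ℂ) (hU : IsOpen U) (T N : Polynomial ℂ) (lam : ℂ)
    (hN : ∀ x ∈ U, N.eval x ≠ 0)
    (ζl : ℂ → ℂ)
    (hd : ∀ x ∈ U, DifferentiableAt ℂ ζl x)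
    (hric : ∀ x ∈ U,
      N.eval x * deriv ζl x = T.eval x - lam * N.eval x - N.eval x * ζl x ^ 2)
    (g : ℂ → ℂ)
    (hgd : ∀ x ∈ U, DifferentiableAt ℂ g x)
    (hg : ∀ x ∈ U, deriv g x = -(Polynomial.derivative N).eval x / N.eval x - 2 * ζl x)
    (R : ℂ → ℂ → ℂ)
    (hR : ∀ ζ x, R ζ x = Complex.exp (g x) / (-ζ + ζl x) ^ 2) :
    ∀ (ζ : ℂ), ∀ x ∈ U, ζ ≠ ζl x →
      deriv (fun w => R w x * (T.eval x - lam * N.eval x - N.eval x * w ^ 2)) ζ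
        + deriv (fun t => R ζ t * N.eval t) x = 0 := by
  intro ζ x hx hne
  have hD : -ζ + ζl x ≠ 0 := by
    intro h
    apply hne
    linear_combination -h
  have hD2 : (-ζ + ζl x) ^ 2 ≠ 0 := pow_ne_zero 2 hD
  have hNx := hN x hx
  have hr := hric x hx
  simp only [hR]
  have h1 := ((hasDerivAt_const ζ (Complex.exp (g x))).fun_div
    ((((hasDerivAt_id' ζ).fun_neg).add_const (ζl x)).fun_pow 2) hD2).fun_mul
    ((((hasDerivAt_id' ζ).fun_pow 2).const_mul (N.eval x)).const_sub
      (T.eval x - lam * N.eval x))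
  have h2 := (((hgd x hx).hasDerivAt.cexp).fun_div
    ((((hd x hx).hasDerivAt).const_add (-ζ)).fun_pow 2) hD2).fun_mul (N.hasDerivAt x)
  rw [h1.deriv, h2.deriv, hg x hx]
  have hT : T.eval x = N.eval x * deriv ζl x + lam * N.eval x + N.eval x * ζl x ^ 2 := by
    linear_combination -hr
  rw [hT]
  obtain ⟨D, hDe⟩ : ∃ D, D = -ζ + ζl x := ⟨_, rfl⟩
  have hz : ζl x = D + ζ := by rw [hDe]; ring
  rw [← hDe] at hD hD2 ⊢
  rw [hz]
  field_simp
  ring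
end

section
/- Let U ⊆ ℂ be an open set, V : ℂ → ℂ a function, and λ ∈ ℂ. Let ζ₁, ζ₂ : ℂ → ℂ be differentiable on U and satisfy the Riccati equation ζᵢ'(x) = V(x) − λ − ζᵢ(x)² on U for i = 1, 2, and let h : ℂ → ℂ be differentiable on U with h'(x) = ζ₂(x) − ζ₁(x) on U. Define I(ζ, x) = ((−ζ + ζ₂(x)) / (−ζ + ζ₁(x))) · exp(h(x)). Then I is a first integral of the Riccati foliation: at every point (ζ, x) with x ∈ U and ζ ≠ ζ₁(x), ∂I/∂x (ζ, x) + (V(x) − λ − ζ²)·∂I/∂ζ (ζ, x) = 0. -/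
/-- Lemma 3.3, first-integral item: if ζ₁, ζ₂ are two solutions of the Riccati
equation ζ' = V − λ − ζ² and h' = ζ₂ − ζ₁, then
I(ζ,x) = ((−ζ + ζ₂(x))/(−ζ + ζ₁(x)))·exp(h(x)) is a first integral of the Riccati
foliation dζ/dx = V − λ − ζ². -/
theorem riccati_first_integral
    (U : Set ℂ) (hU : IsOpen U) (V : ℂ → ℂ) (lam : ℂ)
    (ζ₁ ζ₂ : ℂ → ℂ)
    (hd₁ : ∀ x ∈ U, DifferentiableAt ℂ ζ₁ x)
    (hd₂ : ∀ x ∈ U, DifferentiableAt ℂ ζ₂ x)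
    (hric₁ : ∀ x ∈ U, deriv ζ₁ x = V x - lam - ζ₁ x ^ 2)
    (hric₂ : ∀ x ∈ U, deriv ζ₂ x = V x - lam - ζ₂ x ^ 2)
    (h : ℂ → ℂ)
    (hhd : ∀ x ∈ U, DifferentiableAt ℂ h x)
    (hh : ∀ x ∈ U, deriv h x = ζ₂ x - ζ₁ x)
    (I : ℂ → ℂ → ℂ)
    (hI : ∀ ζ x, I ζ x = ((-ζ + ζ₂ x) / (-ζ + ζ₁ x)) * Complex.exp (h x)) :
    ∀ (ζ : ℂ), ∀ x ∈ U, ζ ≠ ζ₁ x →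
      deriv (fun t => I ζ t) x + (V x - lam - ζ ^ 2) * deriv (fun w => I w x) ζ = 0 := by
  intro ζ x hx hne
  have hne' : -ζ + ζ₁ x ≠ 0 := fun h0 => hne (by linear_combination -h0)
  have e₁ := (hd₁ x hx).hasDerivAt
  have e₂ := (hd₂ x hx).hasDerivAt
  have e₃ := (hhd x hx).hasDerivAt
  rw [hric₁ x hx] at e₁
  rw [hric₂ x hx] at e₂
  rw [hh x hx] at e₃
  have A := ((e₂.const_add (-ζ)).fun_div (e₁.const_add (-ζ)) hne').fun_mul e₃.cexp
  have n := (hasDerivAt_id' ζ).fun_neg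
  have B := ((n.add_const (ζ₂ x)).fun_div (n.add_const (ζ₁ x)) hne').mul_const
    (Complex.exp (h x))
  simp only [hI]
  rw [A.deriv, B.deriv]
  field_simp
  ring
end

section
/- Let U ⊆ ℂ be an open set, V : ℂ → ℂ differentiable on U, and λ ∈ ℂ. Let ζ₀ : ℂ → ℂ be twice differentiable on U with ζ₀'(x) = V(x) − ζ₀(x)² on U, and let ζ_λ : ℂ → ℂ be twice differentiable on U with ζ_λ'(x) = V(x) − λ − ζ_λ(x)² on U, and suppose ζ_λ(x) ≠ ζ₀(x) for all x ∈ U. Define the Darboux-transformed potential V₊ = −ζ₀' + ζ₀² and the function ζ⁺_λ = ζ_λ + (ζ_λ' − ζ₀')/(ζ_λ − ζ₀). Then ζ⁺_λ satisfies the transformed Riccati equation: (ζ⁺_λ)'(x) = V₊(x) − λ − ζ⁺_λ(x)² for all x ∈ U. -/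
/-- Proposition 3.4, invariant-curve item (equivalent form): the Darboux transform
ζ⁺_λ = ζ_λ + (ζ_λ' − ζ₀')/(ζ_λ − ζ₀) of a Riccati solution ζ_λ satisfies the
transformed Riccati equation (ζ⁺_λ)' = V₊ − λ − (ζ⁺_λ)² with V₊ = −ζ₀' + ζ₀². -/
theorem darboux_transformed_riccati_solution
    (U : Set ℂ) (hU : IsOpen U) (V : ℂ → ℂ) (lam : ℂ)
    (hV : ∀ x ∈ U, DifferentiableAt ℂ V x)
    (ζ₀ : ℂ → ℂ)
    (hζ₀d1 : ∀ x ∈ U, DifferentiableAt ℂ ζ₀ x)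
    (hζ₀d2 : ∀ x ∈ U, DifferentiableAt ℂ (deriv ζ₀) x)
    (hric₀ : ∀ x ∈ U, deriv ζ₀ x = V x - ζ₀ x ^ 2)
    (ζl : ℂ → ℂ)
    (hζld1 : ∀ x ∈ U, DifferentiableAt ℂ ζl x)
    (hζld2 : ∀ x ∈ U, DifferentiableAt ℂ (deriv ζl) x)
    (hricl : ∀ x ∈ U, deriv ζl x = V x - lam - ζl x ^ 2)
    (hne : ∀ x ∈ U, ζl x ≠ ζ₀ x)
    (Vplus ζplus : ℂ → ℂ)
    (hVplus : ∀ x, Vplus x = -deriv ζ₀ x + ζ₀ x ^ 2)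
    (hζplus : ∀ x, ζplus x = ζl x + (deriv ζl x - deriv ζ₀ x) / (ζl x - ζ₀ x)) :
    ∀ x ∈ U, deriv ζplus x = Vplus x - lam - ζplus x ^ 2 := by
  intro x hx
  have key : ∀ y ∈ U, ζplus y = -ζ₀ y - lam / (ζl y - ζ₀ y) := by
    intro y hy
    have hd : ζl y - ζ₀ y ≠ 0 := sub_ne_zero.mpr (hne y hy)
    rw [hζplus, hricl y hy, hric₀ y hy]
    field_simp
    ring
  have hd : ζl x - ζ₀ x ≠ 0 := sub_ne_zero.mpr (hne x hx)
  have hev : ζplus =ᶠ[nhds x] fun y => -ζ₀ y - lam / (ζl y - ζ₀ y) :=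
    Filter.eventually_of_mem (hU.mem_nhds hx) key
  have h0 := (hζ₀d1 x hx).hasDerivAt
  have hl := (hζld1 x hx).hasDerivAt
  have h : HasDerivAt (fun y => -ζ₀ y - lam / (ζl y - ζ₀ y))
      (-deriv ζ₀ x - (0 * (ζl x - ζ₀ x) - lam * (deriv ζl x - deriv ζ₀ x))
        / (ζl x - ζ₀ x) ^ 2) x :=
    h0.neg.sub ((hasDerivAt_const x lam).div (hl.sub h0) hd)
  rw [hev.deriv_eq, h.deriv, hVplus, key x hx, hricl x hx, hric₀ x hx]
  field_simp
  ring
end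

section
/- Let U ⊆ ℂ be an open set, V : ℂ → ℂ differentiable on U, and λ ∈ ℂ. Let ζ₀ : ℂ → ℂ be twice differentiable on U with ζ₀'(x) = V(x) − ζ₀(x)², let ζ_λ : ℂ → ℂ be twice differentiable on U with ζ_λ'(x) = V(x) − λ − ζ_λ(x)², with ζ_λ(x) ≠ ζ₀(x) on U, and let G : ℂ → ℂ be differentiable on U with G'(x) = ζ_λ(x) on U. Define V₊ = −ζ₀' + ζ₀², ζ⁺_λ = ζ_λ + (ζ_λ' − ζ₀')/(ζ_λ − ζ₀), and R⁺(ζ, x) = exp(−2·G(x)) / ((ζ_λ(x) − ζ₀(x))²·(−ζ + ζ⁺_λ(x))²). Then R⁺ is an integrating factor of the transformed vector field X⁺ = (V₊(x) − λ − ζ²)·∂/∂ζ + ∂/∂x: at every point (ζ, x) with x ∈ U and ζ ≠ ζ⁺_λ(x), ∂/∂ζ [R⁺(ζ,x)·(V₊(x) − λ − ζ²)] + ∂/∂x [R⁺(ζ,x)] = 0. -/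
/-- Proposition 3.4, integrating-factor item:
R⁺(ζ,x) = exp(−2G(x)) / ((ζ_λ(x) − ζ₀(x))²·(−ζ + ζ⁺_λ(x))²), with G' = ζ_λ,
is an integrating factor of the transformed vector field
X⁺ = (V₊ − λ − ζ²)·∂/∂ζ + ∂/∂x, where V₊ = −ζ₀' + ζ₀² and
ζ⁺_λ = ζ_λ + (ζ_λ' − ζ₀')/(ζ_λ − ζ₀). -/
theorem darboux_transformed_integrating_factor
    (U : Set ℂ) (hU : IsOpen U) (V : ℂ → ℂ) (lam : ℂ)
    (hV : ∀ x ∈ U, DifferentiableAt ℂ V x)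
    (ζ₀ : ℂ → ℂ)
    (hζ₀d1 : ∀ x ∈ U, DifferentiableAt ℂ ζ₀ x)
    (hζ₀d2 : ∀ x ∈ U, DifferentiableAt ℂ (deriv ζ₀) x)
    (hric₀ : ∀ x ∈ U, deriv ζ₀ x = V x - ζ₀ x ^ 2)
    (ζl : ℂ → ℂ)
    (hζld1 : ∀ x ∈ U, DifferentiableAt ℂ ζl x)
    (hζld2 : ∀ x ∈ U, DifferentiableAt ℂ (deriv ζl) x)
    (hricl : ∀ x ∈ U, deriv ζl x = V x - lam - ζl x ^ 2)
    (hne : ∀ x ∈ U, ζl x ≠ ζ₀ x)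
    (G : ℂ → ℂ)
    (hGd : ∀ x ∈ U, DifferentiableAt ℂ G x)
    (hG : ∀ x ∈ U, deriv G x = ζl x)
    (Vplus ζplus : ℂ → ℂ) (R : ℂ → ℂ → ℂ)
    (hVplus : ∀ x, Vplus x = -deriv ζ₀ x + ζ₀ x ^ 2)
    (hζplus : ∀ x, ζplus x = ζl x + (deriv ζl x - deriv ζ₀ x) / (ζl x - ζ₀ x))
    (hR : ∀ ζ x, R ζ x =
      Complex.exp (-2 * G x) / ((ζl x - ζ₀ x) ^ 2 * (-ζ + ζplus x) ^ 2)) :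
    ∀ (ζ : ℂ), ∀ x ∈ U, ζ ≠ ζplus x →
      deriv (fun w => R w x * (Vplus x - lam - w ^ 2)) ζ
        + deriv (fun t => R ζ t) x = 0 := by
  intro ζ x hx hζ
  have hd : ζl x - ζ₀ x ≠ 0 := sub_ne_zero.mpr (hne x hx)
  have hq : -ζ + ζplus x ≠ 0 := by
    intro h
    exact hζ (by linear_combination -h)
  have h0 : HasDerivAt ζ₀ (deriv ζ₀ x) x := (hζ₀d1 x hx).hasDerivAt
  have hl : HasDerivAt ζl (deriv ζl x) x := (hζld1 x hx).hasDerivAt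
  have hGx : HasDerivAt G (ζl x) x := hG x hx ▸ (hGd x hx).hasDerivAt
  have hdd : HasDerivAt (fun t => ζl t - ζ₀ t) (deriv ζl x - deriv ζ₀ x) x := hl.sub h0
  have hpU : ∀ t ∈ U, ζplus t = -ζ₀ t - lam / (ζl t - ζ₀ t) := by
    intro t ht
    have hdt : ζl t - ζ₀ t ≠ 0 := sub_ne_zero.mpr (hne t ht)
    rw [hζplus, hricl t ht, hric₀ t ht]
    field_simp
    ring
  have hp : HasDerivAt ζplus (Vplus x - lam - ζplus x ^ 2) x := by
    have h1 : HasDerivAt (fun t => -ζ₀ t - lam / (ζl t - ζ₀ t))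
        (-deriv ζ₀ x - (0 * (ζl x - ζ₀ x) - lam * (deriv ζl x - deriv ζ₀ x))
          / (ζl x - ζ₀ x) ^ 2) x :=
      h0.neg.sub ((hasDerivAt_const x lam).div hdd hd)
    have h2 := h1.congr_of_eventuallyEq (f₁ := ζplus)
      (by filter_upwards [hU.mem_nhds hx] with t ht using hpU t ht)
    refine h2.congr_deriv ?_
    rw [hVplus, hpU x hx, hricl x hx, hric₀ x hx]
    field_simp
    ring
  have hE : HasDerivAt (fun t => Complex.exp (-2 * G t))
      (Complex.exp (-2 * G x) * (-2 * ζl x)) x := (hGx.const_mul (-2)).cexp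
  have hqx : HasDerivAt (fun t => -ζ + ζplus t) (Vplus x - lam - ζplus x ^ 2) x :=
    hp.const_add (-ζ)
  have hden : (ζl x - ζ₀ x) ^ 2 * (-ζ + ζplus x) ^ 2 ≠ 0 :=
    mul_ne_zero (pow_ne_zero _ hd) (pow_ne_zero _ hq)
  have hRx := hE.fun_div ((hdd.fun_pow 2).fun_mul (hqx.fun_pow 2)) hden
  have hqz : HasDerivAt (fun w : ℂ => -w + ζplus x) (-1) ζ :=
    (hasDerivAt_id' ζ).neg.add_const _
  have hRz := ((hasDerivAt_const ζ (Complex.exp (-2 * G x))).fun_div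
    ((hqz.fun_pow 2).const_mul ((ζl x - ζ₀ x) ^ 2)) hden).fun_mul
    (((hasDerivAt_id' ζ).fun_pow 2).const_sub (Vplus x - lam))
  have e : deriv ζl x - deriv ζ₀ x = (ζplus x - ζl x) * (ζl x - ζ₀ x) := by
    rw [hζplus]
    field_simp
    ring
  simp only [hR]
  rw [hRx.deriv, hRz.deriv, e]
  generalize ζplus x = p at *
  generalize Complex.exp (-2 * G x) = E at *
  generalize ζl x - ζ₀ x = d at *
  obtain ⟨q, rfl⟩ : ∃ q, p = ζ + q := ⟨p - ζ, by ring⟩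
  simp only [neg_add_cancel_left] at *
  norm_num
  field_simp
  ring
end

section
/- Let U ⊆ ℂ be an open set, V : ℂ → ℂ differentiable on U, and λ ∈ ℂ. Let ζ₀ : ℂ → ℂ be twice differentiable on U with ζ₀'(x) = V(x) − ζ₀(x)², and let ζ₁, ζ₂ : ℂ → ℂ be twice differentiable on U with ζᵢ'(x) = V(x) − λ − ζᵢ(x)² on U and ζᵢ(x) ≠ ζ₀(x) on U for i = 1, 2. Let h : ℂ → ℂ be differentiable on U with h'(x) = ζ₂(x) − ζ₁(x) on U. Define V₊ = −ζ₀' + ζ₀² and ζ⁺ᵢ = ζᵢ + (ζᵢ' − ζ₀')/(ζᵢ − ζ₀). Then I⁺(ζ, x) = ((−ζ + ζ⁺₂(x)) / (−ζ + ζ⁺₁(x))) · ((ζ₂(x) − ζ₀(x)) / (ζ₁(x) − ζ₀(x))) · exp(h(x)) is a first integral of the transformed vector field: at every point (ζ, x) with x ∈ U and ζ ≠ ζ⁺₁(x), ∂I⁺/∂x (ζ, x) + (V₊(x) − λ − ζ²)·∂I⁺/∂ζ (ζ, x) = 0. -/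
lemma zplus_hasDerivAt (U : Set ℂ) (hU : IsOpen U) (V : ℂ → ℂ) (lam : ℂ) (ζ₀ ζ₁ p : ℂ → ℂ)
    (hd0 : ∀ x ∈ U, DifferentiableAt ℂ ζ₀ x)
    (hr0 : ∀ x ∈ U, deriv ζ₀ x = V x - ζ₀ x ^ 2)
    (hd1 : ∀ x ∈ U, DifferentiableAt ℂ ζ₁ x)
    (hr1 : ∀ x ∈ U, deriv ζ₁ x = V x - lam - ζ₁ x ^ 2)
    (hne : ∀ x ∈ U, ζ₁ x ≠ ζ₀ x)
    (hp : ∀ x, p x = ζ₁ x + (deriv ζ₁ x - deriv ζ₀ x) / (ζ₁ x - ζ₀ x))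
    (x : ℂ) (hx : x ∈ U) :
    HasDerivAt p ((-deriv ζ₀ x + ζ₀ x ^ 2) - lam - p x ^ 2) x ∧
    HasDerivAt (fun t => ζ₁ t - ζ₀ t) ((ζ₁ x - ζ₀ x) * (p x - ζ₁ x)) x := by
  have key : ∀ y ∈ U, p y = -ζ₀ y - lam / (ζ₁ y - ζ₀ y) := by
    intro y hy
    have hn : ζ₁ y - ζ₀ y ≠ 0 := sub_ne_zero.mpr (hne y hy)
    rw [hp, hr0 y hy, hr1 y hy]
    field_simp
    ring
  have hn : ζ₁ x - ζ₀ x ≠ 0 := sub_ne_zero.mpr (hne x hx)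
  have h0 := (hd0 x hx).hasDerivAt
  have h1 := (hd1 x hx).hasDerivAt
  have hd := h1.sub h0
  constructor
  · have e : p =ᶠ[nhds x] fun y => -ζ₀ y - lam / (ζ₁ y - ζ₀ y) := by
      filter_upwards [hU.mem_nhds hx] with y hy using key y hy
    refine HasDerivAt.congr_of_eventuallyEq ?_ e
    have := h0.neg.sub ((hasDerivAt_const x lam).div hd hn)
    refine this.congr_deriv ?_
    simp only [Pi.sub_apply]
    rw [key x hx, hr0 x hx, hr1 x hx]
    field_simp
    ring
  · refine hd.congr_deriv ?_
    rw [hp]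
    field_simp
    ring

/-- Proposition 3.4, first-integral item:
I⁺(ζ,x) = ((−ζ + ζ⁺₂(x))/(−ζ + ζ⁺₁(x)))·((ζ₂(x) − ζ₀(x))/(ζ₁(x) − ζ₀(x)))·exp(h(x))
is a first integral of the transformed vector field
X⁺ = (V₊ − λ − ζ²)·∂/∂ζ + ∂/∂x, where V₊ = −ζ₀' + ζ₀²,
ζ⁺ᵢ = ζᵢ + (ζᵢ' − ζ₀')/(ζᵢ − ζ₀) and h' = ζ₂ − ζ₁. -/
theorem darboux_transformed_first_integral
    (U : Set ℂ) (hU : IsOpen U) (V : ℂ → ℂ) (lam : ℂ)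
    (hV : ∀ x ∈ U, DifferentiableAt ℂ V x)
    (ζ₀ : ℂ → ℂ)
    (hζ₀d1 : ∀ x ∈ U, DifferentiableAt ℂ ζ₀ x)
    (hζ₀d2 : ∀ x ∈ U, DifferentiableAt ℂ (deriv ζ₀) x)
    (hric₀ : ∀ x ∈ U, deriv ζ₀ x = V x - ζ₀ x ^ 2)
    (ζ₁ ζ₂ : ℂ → ℂ)
    (hζ₁d1 : ∀ x ∈ U, DifferentiableAt ℂ ζ₁ x)
    (hζ₁d2 : ∀ x ∈ U, DifferentiableAt ℂ (deriv ζ₁) x)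
    (hric₁ : ∀ x ∈ U, deriv ζ₁ x = V x - lam - ζ₁ x ^ 2)
    (hne₁ : ∀ x ∈ U, ζ₁ x ≠ ζ₀ x)
    (hζ₂d1 : ∀ x ∈ U, DifferentiableAt ℂ ζ₂ x)
    (hζ₂d2 : ∀ x ∈ U, DifferentiableAt ℂ (deriv ζ₂) x)
    (hric₂ : ∀ x ∈ U, deriv ζ₂ x = V x - lam - ζ₂ x ^ 2)
    (hne₂ : ∀ x ∈ U, ζ₂ x ≠ ζ₀ x)
    (h : ℂ → ℂ)
    (hhd : ∀ x ∈ U, DifferentiableAt ℂ h x)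
    (hh : ∀ x ∈ U, deriv h x = ζ₂ x - ζ₁ x)
    (Vplus ζplus₁ ζplus₂ : ℂ → ℂ) (I : ℂ → ℂ → ℂ)
    (hVplus : ∀ x, Vplus x = -deriv ζ₀ x + ζ₀ x ^ 2)
    (hζplus₁ : ∀ x, ζplus₁ x = ζ₁ x + (deriv ζ₁ x - deriv ζ₀ x) / (ζ₁ x - ζ₀ x))
    (hζplus₂ : ∀ x, ζplus₂ x = ζ₂ x + (deriv ζ₂ x - deriv ζ₀ x) / (ζ₂ x - ζ₀ x))
    (hI : ∀ ζ x, I ζ x =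
      ((-ζ + ζplus₂ x) / (-ζ + ζplus₁ x)) * ((ζ₂ x - ζ₀ x) / (ζ₁ x - ζ₀ x))
        * Complex.exp (h x)) :
    ∀ (ζ : ℂ), ∀ x ∈ U, ζ ≠ ζplus₁ x →
      deriv (fun t => I ζ t) x
        + (Vplus x - lam - ζ ^ 2) * deriv (fun w => I w x) ζ = 0 := by
  intro ζ x hx hz
  obtain ⟨hp1, hD1⟩ := zplus_hasDerivAt U hU V lam ζ₀ ζ₁ ζplus₁ hζ₀d1 hric₀ hζ₁d1 hric₁ hne₁ hζplus₁ x hx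
  obtain ⟨hp2, hD2⟩ := zplus_hasDerivAt U hU V lam ζ₀ ζ₂ ζplus₂ hζ₀d1 hric₀ hζ₂d1 hric₂ hne₂ hζplus₂ x hx
  rw [← hVplus] at hp1 hp2
  have hn : ζ₁ x - ζ₀ x ≠ 0 := sub_ne_zero.mpr (hne₁ x hx)
  have hz' : -ζ + ζplus₁ x ≠ 0 := by
    intro h0
    exact hz (by linear_combination -h0)
  have hE := (hhd x hx).hasDerivAt.cexp
  rw [hh x hx] at hE
  have hX := (((hp2.const_add (-ζ)).div (hp1.const_add (-ζ)) hz').mul (hD2.div hD1 hn)).mul hE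
  have hneg := (hasDerivAt_id ζ).neg
  have hZ := (((hneg.add_const (ζplus₂ x)).div (hneg.add_const (ζplus₁ x)) hz').mul_const
    ((ζ₂ x - ζ₀ x) / (ζ₁ x - ζ₀ x))).mul_const (Complex.exp (h x))
  have e1 : (fun t => I ζ t) = fun t => ((-ζ + ζplus₂ t) / (-ζ + ζplus₁ t)) *
      ((ζ₂ t - ζ₀ t) / (ζ₁ t - ζ₀ t)) * Complex.exp (h t) := funext fun t => hI ζ t
  have e2 : (fun w => I w x) = fun w => ((-w + ζplus₂ x) / (-w + ζplus₁ x)) *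
      ((ζ₂ x - ζ₀ x) / (ζ₁ x - ζ₀ x)) * Complex.exp (h x) := funext fun w => hI w x
  have f1 := (congrArg (fun f => deriv f x) e1).trans hX.deriv
  have f2 := (congrArg (fun f => deriv f ζ) e2).trans hZ.deriv
  beta_reduce at f1 f2
  rw [f1, f2]
  simp only [Pi.mul_apply, Pi.div_apply, Pi.neg_apply, id]
  generalize ζplus₁ x = p at hz' ⊢
  generalize ζplus₂ x = q
  generalize Complex.exp (h x) = E
  field_simp
  ring
end
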